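/- arXiv:math/0201083 — 2 statements merged into one kernel-verified Lean document; each statement's English description precedes it below -/
import Mathlib

section
/- For elements a, b of the free commutative monoid [X] (identified with finitely supported functions ℕ⁺ → ℕ), one has a ≤_𝔠 b if and only if for every j ≥ 1 the tail sums satisfy Σ_{i ≥ j} a_i ≤ Σ_{i ≥ j} b_i. Consequently, the map a ↦ (Σ_{i≥j} a_i)_{j≥1} is an order isomorphism from ([X], 𝔠) onto the set of non-increasing finitely supported sequences of natural numbers with the componentwise order (the Young lattice of integer partitions). -/
/-- A standard term order on the free monoid `X*` on the countable alphabet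
`X = {x₁, x₂, …}`, whose words we represent as lists of positive integers
(the word `x_{i₁} ⋯ x_{i_d}` is the list `[i₁, …, i_d]`).  It is a strict
total order such that the empty word `1` is smallest, which is compatible
with two-sided multiplication (concatenation), and with `x₁ < x₂ < ⋯`. -/
structure StdTermOrder where
  lt : List ℕ+ → List ℕ+ → Prop
  irrefl : ∀ a, ¬ lt a a
  trans : ∀ a b c, lt a b → lt b c → lt a c
  total : ∀ a b, a ≠ b → lt a b ∨ lt b a
  one_lt : ∀ t, t ≠ [] → lt [] t
  mul_lt : ∀ a b s t, lt s t → lt (a ++ s ++ b) (a ++ t ++ b)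
  std : ∀ i j : ℕ+, i < j → lt [i] [j]

/-- The partial order `𝔑`, the intersection of all standard term orders:
`m ≤_𝔑 m'` iff `m ≤ m'` holds for every standard term order on `X*`. -/
def Nle (m m' : List ℕ+) : Prop := ∀ T : StdTermOrder, m = m' ∨ T.lt m m'

/-- The strict version of `𝔑`. -/
def Nlt (m m' : List ℕ+) : Prop := Nle m m' ∧ m ≠ m'

/-- `m'` covers `m` in the partial order `𝔑`. -/
def NCovers (m m' : List ℕ+) : Prop :=
  Nlt m m' ∧ ∀ k, Nlt m k → ¬ Nlt k m'

/-- A standard term order on the free abelian monoid `[X]`, whose elements we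
represent as finitely supported functions `ℕ+ →₀ ℕ` (exponent vectors): a
strict total order with `1` (i.e. `0`) smallest, compatible with
multiplication (addition of exponent vectors), and with `x₁ < x₂ < ⋯`. -/
structure CStdTermOrder where
  lt : (ℕ+ →₀ ℕ) → (ℕ+ →₀ ℕ) → Prop
  irrefl : ∀ a, ¬ lt a a
  trans : ∀ a b c, lt a b → lt b c → lt a c
  total : ∀ a b, a ≠ b → lt a b ∨ lt b a
  one_lt : ∀ t, t ≠ 0 → lt 0 t
  mul_lt : ∀ t s s', lt s s' → lt (t + s) (t + s')
  std : ∀ i j : ℕ+, i < j → lt (Finsupp.single i 1) (Finsupp.single j 1)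

/-- The partial order `𝔠` on `[X]`, the intersection of all standard term
orders on `[X]`. -/
def Cle (a b : ℕ+ →₀ ℕ) : Prop := ∀ T : CStdTermOrder, a = b ∨ T.lt a b

/-- The tail sum `Σ_{i ≥ j} a_i` of an exponent vector. -/
def tailSum (a : ℕ+ →₀ ℕ) (j : ℕ+) : ℕ :=
  ∑ i ∈ a.support.filter (fun i => j ≤ i), a i

theorem tailSum_eq (a : ℕ+ →₀ ℕ) (j : ℕ+) :
    tailSum a j = a.sum (fun i n => if j ≤ i then n else 0) := by
  unfold tailSum Finsupp.sum
  rw [Finset.sum_filter]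

theorem tailSum_zero (j : ℕ+) : tailSum 0 j = 0 := by
  simp [tailSum]

theorem tailSum_add (a b : ℕ+ →₀ ℕ) (j : ℕ+) :
    tailSum (a + b) j = tailSum a j + tailSum b j := by
  simp only [tailSum_eq]
  apply Finsupp.sum_add_index'
  · intro i; simp
  · intro i m n; split_ifs <;> simp

theorem tailSum_single (i : ℕ+) (n : ℕ) (j : ℕ+) :
    tailSum (Finsupp.single i n) j = if j ≤ i then n else 0 := by
  rw [tailSum_eq, Finsupp.sum_single_index]
  simp

theorem tailSum_succ (a : ℕ+ →₀ ℕ) (j : ℕ+) :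
    tailSum a j = a j + tailSum a (j + 1) := by
  induction a using Finsupp.induction_linear with
  | zero => simp [tailSum_zero]
  | add f g hf hg => simp only [tailSum_add, Finsupp.add_apply]; omega
  | single i n =>
    simp only [tailSum_single, Finsupp.single_apply, PNat.add_one_le_iff]
    rcases lt_trichotomy i j with h | h | h
    · simp [h.ne, not_le.2 h, not_lt.2 h.le]
    · simp [h]
    · simp [h.ne', h.le, h]

theorem tailSum_eq_zero (a : ℕ+ →₀ ℕ) (j : ℕ+) (h : ∀ i, j ≤ i → a i = 0) :
    tailSum a j = 0 := by
  unfold tailSum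
  apply Finset.sum_eq_zero
  intro i hi
  exact h i (Finset.mem_filter.1 hi).2

theorem exists_of_tailSum_ne (a : ℕ+ →₀ ℕ) (j : ℕ+) (h : tailSum a j ≠ 0) :
    ∃ i, j ≤ i ∧ a i ≠ 0 := by
  by_contra! hc
  exact h (tailSum_eq_zero a j hc)

/-- The pure (inverse) lexicographic order. -/
def lexTop (a b : ℕ+ →₀ ℕ) : Prop := ∃ i, a i < b i ∧ ∀ k, i < k → a k = b k

theorem lexTop_irrefl (a : ℕ+ →₀ ℕ) : ¬ lexTop a a := by
  rintro ⟨i, h, -⟩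
  exact lt_irrefl _ h

theorem lexTop_trans (a b c : ℕ+ →₀ ℕ) (h1 : lexTop a b) (h2 : lexTop b c) : lexTop a c := by
  obtain ⟨i, hi, hi2⟩ := h1
  obtain ⟨j, hj, hj2⟩ := h2
  rcases lt_trichotomy i j with h | h | h
  · exact ⟨j, by rw [hi2 j h]; exact hj, fun k hk => (hi2 k (h.trans hk)).trans (hj2 k hk)⟩
  · subst h
    exact ⟨i, hi.trans hj, fun k hk => (hi2 k hk).trans (hj2 k hk)⟩
  · exact ⟨i, by rw [← hj2 i h]; exact hi, fun k hk => (hi2 k hk).trans (hj2 k (h.trans hk))⟩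

theorem lexTop_total (a b : ℕ+ →₀ ℕ) (h : a ≠ b) : lexTop a b ∨ lexTop b a := by
  classical
  have hne : (a.neLocus b).Nonempty := Finsupp.nonempty_neLocus_iff.2 h
  have hm := Finset.max'_mem _ hne
  have hk : ∀ k, (a.neLocus b).max' hne < k → a k = b k := by
    intro k hk
    by_contra hc
    exact absurd (Finset.le_max' _ k (Finsupp.mem_neLocus.2 hc)) (not_le.2 hk)
  rcases lt_or_gt_of_ne (Finsupp.mem_neLocus.1 hm) with h1 | h1
  · exact Or.inl ⟨_, h1, hk⟩
  · exact Or.inr ⟨_, h1, fun k h2 => (hk k h2).symm⟩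

/-- The standard term order comparing the `j`-th tail sum first. -/
def tailOrder (j : ℕ+) : CStdTermOrder where
  lt a b := tailSum a j < tailSum b j ∨ (tailSum a j = tailSum b j ∧ lexTop a b)
  irrefl a h := by
    rcases h with h | h
    · exact lt_irrefl _ h
    · exact lexTop_irrefl a h.2
  trans a b c h1 h2 := by
    rcases h1 with h1 | ⟨h1, h1'⟩ <;> rcases h2 with h2 | ⟨h2, h2'⟩
    · left; omega
    · left; omega
    · left; omega
    · exact Or.inr ⟨h1.trans h2, lexTop_trans a b c h1' h2'⟩
  total a b h := by
    rcases lt_trichotomy (tailSum a j) (tailSum b j) with h1 | h1 | h1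
    · exact Or.inl (Or.inl h1)
    · rcases lexTop_total a b h with h2 | h2
      · exact Or.inl (Or.inr ⟨h1, h2⟩)
      · exact Or.inr (Or.inr ⟨h1.symm, h2⟩)
    · exact Or.inr (Or.inl h1)
  one_lt t ht := by
    rw [tailSum_zero]
    rcases Nat.eq_zero_or_pos (tailSum t j) with h | h
    · refine Or.inr ⟨h.symm, ?_⟩
      rcases lexTop_total 0 t ht.symm with h2 | ⟨i, h2, -⟩
      · exact h2
      · simp at h2
    · exact Or.inl h
  mul_lt t s s' h := by
    simp only [tailSum_add]
    rcases h with h | ⟨h, i, h1, h2⟩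
    · left; omega
    · refine Or.inr ⟨by omega, i, ?_, ?_⟩
      · simpa using h1
      · intro k hk
        simpa using h2 k hk
  std i k h := by
    have hl : lexTop (Finsupp.single i 1) (Finsupp.single k 1) := by
      refine ⟨k, by simp [Finsupp.single_apply, h.ne], fun l hl => ?_⟩
      simp [Finsupp.single_apply, hl.ne, (h.trans hl).ne]
    simp only [tailSum_single]
    by_cases h1 : j ≤ i
    · right; simp [h1, h1.trans h.le, hl]
    · by_cases h2 : j ≤ k
      · left; simp [h1, h2]
      · right; simp [h1, h2, hl]

theorem cle_of_tailSum (T : CStdTermOrder) (n : ℕ) : ∀ a b : ℕ+ →₀ ℕ, tailSum a 1 = n →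
    (∀ j, tailSum a j ≤ tailSum b j) → a = b ∨ T.lt a b := by
  classical
  induction n with
  | zero =>
    intro a b ha _
    have : a = 0 := by
      ext i
      by_contra hc
      have h : i ∈ a.support.filter (fun i => (1 : ℕ+) ≤ i) := by
        simp only [Finset.mem_filter, Finsupp.mem_support_iff]
        exact ⟨hc, PNat.one_le i⟩
      exact hc (Finset.sum_eq_zero_iff.1 ha i h)
    subst this
    by_cases hb : b = 0
    · exact Or.inl hb.symm
    · exact Or.inr (T.one_lt b hb)
  | succ n ih =>
    intro a b ha hab
    have hne : a.support.Nonempty := by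
      obtain ⟨i, -, hi⟩ := exists_of_tailSum_ne a 1 (by omega)
      exact ⟨i, Finsupp.mem_support_iff.2 hi⟩
    obtain ⟨m, hm⟩ : ∃ m, m = a.support.max' hne := ⟨_, rfl⟩
    have ham : a m ≠ 0 := by
      rw [hm]; exact Finsupp.mem_support_iff.1 (Finset.max'_mem _ hne)
    have hmax : ∀ i, m < i → a i = 0 := by
      intro i hi
      by_contra hc
      rw [hm] at hi
      exact absurd (Finset.le_max' _ i (Finsupp.mem_support_iff.2 hc)) (not_le.2 hi)
    have hbm : tailSum b m ≠ 0 := by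
      have h1 := hab m
      have h2 := tailSum_succ a m
      omega
    obtain ⟨k, hk, hbk⟩ := exists_of_tailSum_ne b m hbm
    obtain ⟨a', rfl⟩ : ∃ a', a = a' + Finsupp.single m 1 :=
      ⟨a - Finsupp.single m 1, (tsub_add_cancel_of_le (by
        rw [Finsupp.single_le_iff]; omega)).symm⟩
    obtain ⟨b', rfl⟩ : ∃ b', b = b' + Finsupp.single k 1 :=
      ⟨b - Finsupp.single k 1, (tsub_add_cancel_of_le (by
        rw [Finsupp.single_le_iff]; omega)).symm⟩
    have key : a' = b' ∨ T.lt a' b' := by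
      apply ih
      · rw [tailSum_add, tailSum_single, if_pos (PNat.one_le m)] at ha
        omega
      · intro j
        by_cases hj : j ≤ m
        · have h := hab j
          rw [tailSum_add, tailSum_add, tailSum_single, tailSum_single, if_pos hj,
            if_pos (hj.trans hk)] at h
          omega
        · have h := tailSum_eq_zero _ j
            (fun i hi => hmax i (lt_of_lt_of_le (not_le.1 hj) hi))
          rw [tailSum_add] at h
          omega
    have h1 : a' + Finsupp.single m 1 = b' + Finsupp.single m 1 ∨
        T.lt (a' + Finsupp.single m 1) (b' + Finsupp.single m 1) := by
      rcases key with h | h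
      · left; rw [h]
      · right
        have := T.mul_lt (Finsupp.single m 1) _ _ h
        rwa [add_comm _ a', add_comm _ b'] at this
    rcases hk.eq_or_lt with h | h
    · rw [← h]; exact h1
    · have h2 := T.mul_lt b' _ _ (T.std m k h)
      rcases h1 with h1 | h1
      · rw [h1]; exact Or.inr h2
      · exact Or.inr (T.trans _ _ _ h1 h2)

theorem bound_of_finite (f : ℕ+ → ℕ) (h : {j | f j ≠ 0}.Finite) :
    ∃ N : ℕ+, ∀ j, N < j → f j = 0 := by
  obtain ⟨N, hN⟩ := h.bddAbove
  refine ⟨N, fun j hj => ?_⟩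
  by_contra hc
  exact absurd (hN hc) (not_le.2 hj)

theorem finite_tailSum (a : ℕ+ →₀ ℕ) : {j | tailSum a j ≠ 0}.Finite := by
  apply Set.Finite.subset (a.support.finite_toSet.biUnion (fun i _ => Set.finite_Iic i))
  intro j hj
  obtain ⟨i, h1, h2⟩ := exists_of_tailSum_ne a j hj
  simp only [Set.mem_iUnion]
  exact ⟨i, by simpa using h2, h1⟩

/-- `a ≤_𝔠 b` iff all tail sums of `a` are dominated by those of `b`;
consequently `a ↦ (Σ_{i ≥ j} a_i)_j` is an order isomorphism from
`([X], 𝔠)` onto the non-increasing finitely supported sequences with the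
componentwise order, i.e. onto the Young lattice. -/
theorem stmt13 :
    (∀ a b : ℕ+ →₀ ℕ, Cle a b ↔ ∀ j : ℕ+, tailSum a j ≤ tailSum b j) ∧
    Function.Injective (fun (a : ℕ+ →₀ ℕ) (j : ℕ+) => tailSum a j) ∧
    Set.range (fun (a : ℕ+ →₀ ℕ) (j : ℕ+) => tailSum a j) =
      {f : ℕ+ → ℕ | (∀ j, f (j + 1) ≤ f j) ∧ {j | f j ≠ 0}.Finite} := by
  refine ⟨fun a b => ⟨fun h j => ?_, fun h T => cle_of_tailSum T _ a b rfl h⟩, ?_, ?_⟩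
  · rcases h (tailOrder j) with h | h | h
    · rw [h]
    · exact h.le
    · exact h.1.le
  · intro a b h
    ext i
    have h1 := tailSum_succ a i
    have h2 := tailSum_succ b i
    have h3 : tailSum a i = tailSum b i := congrFun h i
    have h4 : tailSum a (i + 1) = tailSum b (i + 1) := congrFun h (i + 1)
    omega
  · ext f
    constructor
    · rintro ⟨a, rfl⟩
      refine ⟨fun j => ?_, finite_tailSum a⟩
      have := tailSum_succ a j
      show tailSum a (j + 1) ≤ tailSum a j
      omega
    · rintro ⟨hf, hfin⟩
      have hs : (Function.support (fun j => f j - f (j + 1))).Finite := by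
        apply hfin.subset
        intro j hj
        simp only [Function.mem_support] at hj
        show f j ≠ 0
        omega
      obtain ⟨a, ha⟩ : ∃ a : ℕ+ →₀ ℕ, ∀ j, a j = f j - f (j + 1) :=
        ⟨Finsupp.ofSupportFinite _ hs, fun j => rfl⟩
      refine ⟨a, ?_⟩
      obtain ⟨N, hN⟩ := bound_of_finite f hfin
      obtain ⟨M, hM⟩ := bound_of_finite _ (finite_tailSum a)
      have key : ∀ n : ℕ, ∀ j : ℕ+, (N : ℕ) + M < j + n → tailSum a j = f j := by
        intro n
        induction n with
        | zero =>
          intro j hj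
          rw [hN j (by rw [← PNat.coe_lt_coe]; omega), hM j (by rw [← PNat.coe_lt_coe]; omega)]
        | succ n ih =>
          intro j hj
          have h1 := ih (j + 1) (by rw [PNat.add_coe, PNat.one_coe]; omega)
          have h2 := tailSum_succ a j
          have h3 := ha j
          have h4 := hf j
          omega
      funext j
      exact key (N + M) j (by have := j.pos; omega)
end

section
/- The pair (σ, σ⁺) is a Galois coconnection between (X*, Q) and ([X], 𝔠): σ and σ⁺ are both order-preserving, σ⁺(σ(m)) ≥_Q m for every word m ∈ X*, and σ(σ⁺(w)) ≤_𝔠 w (indeed σ(σ⁺(w)) = w) for every w ∈ [X]. -/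
/-- A sorted standard term order: a standard term order in which additionally
`t xᵢ x_j s > t x_j xᵢ s` whenever `i < j` (sorted words are larger). -/
structure SortedStdTermOrder extends StdTermOrder where
  sorted : ∀ (t s : List ℕ+) (i j : ℕ+), i < j →
    lt (t ++ j :: i :: s) (t ++ i :: j :: s)

/-- The partial order `Q`, the intersection of all sorted standard term
orders on `X*`. -/
def Qle (m m' : List ℕ+) : Prop := ∀ T : SortedStdTermOrder, m = m' ∨ T.lt m m'

/-- The abelianization map `σ : X* → [X]`, recording for each `i` the number
of occurrences of the letter `xᵢ`. -/
noncomputable def sigmaAb : List ℕ+ → (ℕ+ →₀ ℕ)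
  | [] => 0
  | a :: t => Finsupp.single a 1 + sigmaAb t

/-- The sorting map `σ⁺ : [X] → X*`, sending `x₁^{a₁} ⋯ x_ℓ^{a_ℓ}` to the
weakly increasing word `x₁^{a₁} ⋯ x_ℓ^{a_ℓ}`. -/
def sigmaPlus (f : ℕ+ →₀ ℕ) : List ℕ+ :=
  (f.support.sort (· ≤ ·)).foldr (fun a l => List.replicate (f a) a ++ l) []

theorem ab_append (s t : List ℕ+) : sigmaAb (s ++ t) = sigmaAb s + sigmaAb t := by
  induction s with
  | nil => simp [sigmaAb]
  | cons a s ih => simp [sigmaAb, ih, add_assoc]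

theorem ab_apply (s : List ℕ+) (i : ℕ+) : sigmaAb s i = s.count i := by
  induction s with
  | nil => simp [sigmaAb]
  | cons a s ih =>
    simp only [sigmaAb, Finsupp.add_apply, ih, List.count_cons, Finsupp.single_apply, beq_iff_eq]
    omega

theorem perm_of_ab {s t : List ℕ+} (h : sigmaAb s = sigmaAb t) : s.Perm t := by
  rw [List.perm_iff_count]
  intro a
  rw [← ab_apply, ← ab_apply, h]

theorem ab_of_perm {s t : List ℕ+} (h : s.Perm t) : sigmaAb s = sigmaAb t := by
  ext a
  rw [ab_apply, ab_apply, h.count_eq]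

theorem ab_replicate (n : ℕ) (a : ℕ+) : sigmaAb (List.replicate n a) = Finsupp.single a n := by
  induction n with
  | zero => simp [sigmaAb]
  | succ n ih => rw [List.replicate_succ, sigmaAb, ih, ← Finsupp.single_add, add_comm]

theorem ab_foldr (f : ℕ+ →₀ ℕ) (l : List ℕ+) :
    sigmaAb (l.foldr (fun a l => List.replicate (f a) a ++ l) []) =
      (l.map (fun a => Finsupp.single a (f a))).sum := by
  induction l with
  | nil => simp [sigmaAb]
  | cons a l ih => simp only [List.foldr_cons, List.map_cons, List.sum_cons, ab_append,
      ab_replicate, ih]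

theorem ab_plus (f : ℕ+ →₀ ℕ) : sigmaAb (sigmaPlus f) = f := by
  unfold sigmaPlus
  rw [ab_foldr]
  conv_rhs => rw [← Finsupp.sum_single f]
  unfold Finsupp.sum
  rw [Finset.sum_eq_multiset_sum, ← Multiset.sum_coe, ← Multiset.map_coe, Finset.sort_eq]

theorem mem_foldr (f : ℕ+ →₀ ℕ) (l : List ℕ+) (x : ℕ+)
    (h : x ∈ l.foldr (fun a l => List.replicate (f a) a ++ l) []) : x ∈ l := by
  induction l with
  | nil => simp at h
  | cons a l ih =>
    simp only [List.foldr_cons, List.mem_append, List.mem_replicate] at h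
    rcases h with h | h
    · simp [h.2]
    · exact List.mem_cons_of_mem _ (ih h)

theorem foldr_sorted (f : ℕ+ →₀ ℕ) (l : List ℕ+) (hl : l.Pairwise (· ≤ ·)) :
    (l.foldr (fun a l => List.replicate (f a) a ++ l) []).Pairwise (· ≤ ·) := by
  induction l with
  | nil => simp
  | cons a l ih =>
    rw [List.pairwise_cons] at hl
    simp only [List.foldr_cons, List.pairwise_append]
    refine ⟨?_, ih hl.2, ?_⟩
    · rw [List.pairwise_replicate]; right; exact le_refl a
    · intro x hx y hy
      rw [List.eq_of_mem_replicate hx]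
      exact hl.1 _ (mem_foldr f l y hy)

theorem plus_sorted (f : ℕ+ →₀ ℕ) : (sigmaPlus f).Pairwise (· ≤ ·) :=
  foldr_sorted f _ (Finset.pairwise_sort _ _)

theorem plus_ab (m : List ℕ+) : sigmaPlus (sigmaAb m) = m.insertionSort (· ≤ ·) := by
  refine List.Perm.eq_of_pairwise (le := (· ≤ ·)) (fun a b _ _ h1 h2 => le_antisymm h1 h2) (plus_sorted _)
    (List.pairwise_insertionSort _ _) ?_
  exact (perm_of_ab (ab_plus _)).trans (List.perm_insertionSort _ _).symm

/-- Weak version of a term order. -/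
def tle (T : StdTermOrder) (a b : List ℕ+) : Prop := a = b ∨ T.lt a b

theorem tle_trans (T : StdTermOrder) {a b c : List ℕ+} (h : tle T a b) (h' : tle T b c) :
    tle T a c := by
  rcases h with rfl | h
  · exact h'
  · rcases h' with rfl | h'
    · exact Or.inr h
    · exact Or.inr (T.trans _ _ _ h h')

theorem tle_mul (T : StdTermOrder) (a b : List ℕ+) {s t : List ℕ+} (h : tle T s t) :
    tle T (a ++ s ++ b) (a ++ t ++ b) := by
  rcases h with rfl | h
  · exact Or.inl rfl
  · exact Or.inr (T.mul_lt _ _ _ _ h)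

theorem le_insert (T : SortedStdTermOrder) (a : ℕ+) (l : List ℕ+) :
    tle T.toStdTermOrder (a :: l) (l.orderedInsert (· ≤ ·) a) := by
  induction l with
  | nil => exact Or.inl rfl
  | cons b l ih =>
    rw [List.orderedInsert_cons]
    split_ifs with h
    · exact Or.inl rfl
    · refine tle_trans _ (Or.inr (T.sorted [] l b a (not_le.1 h))) ?_
      simpa using tle_mul _ [b] [] ih

theorem le_sort (T : SortedStdTermOrder) (l : List ℕ+) :
    tle T.toStdTermOrder l (l.insertionSort (· ≤ ·)) := by
  induction l with
  | nil => exact Or.inl rfl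
  | cons b l ih =>
    rw [List.insertionSort_cons]
    refine tle_trans _ ?_ (le_insert T _ _)
    simpa using tle_mul _ [b] [] ih

theorem le_of_count (T : StdTermOrder) (la lb : List ℕ+) (ha : la.Pairwise (fun x y => y ≤ x))
    (hb : lb.Pairwise (fun x y => y ≤ x))
    (h : ∀ k : ℕ+, la.countP (fun i => decide (k ≤ i)) ≤ lb.countP (fun i => decide (k ≤ i))) :
    tle T la.reverse lb.reverse := by
  induction la generalizing lb with
  | nil =>
    by_cases hlb : lb = []
    · subst hlb; exact Or.inl rfl
    · exact Or.inr (T.one_lt _ (by simpa using hlb))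
  | cons x la ih =>
    rw [List.pairwise_cons] at ha
    have hx := h x
    have hpos : 0 < lb.countP (fun i => decide (x ≤ i)) := by
      refine lt_of_lt_of_le ?_ hx
      rw [List.countP_pos_iff]
      exact ⟨x, by simp, by simp⟩
    rw [List.countP_pos_iff] at hpos
    obtain ⟨z, hz, hxz⟩ := hpos
    have hxz : x ≤ z := by simpa using hxz
    cases lb with
    | nil => simp at hz
    | cons y lb =>
      rw [List.pairwise_cons] at hb
      have hxy : x ≤ y := by
        rcases List.mem_cons.1 hz with rfl | hz
        · exact hxz
        · exact hxz.trans (hb.1 _ hz)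
      have ih' := ih lb ha.2 hb.2 (by
        intro k
        by_cases hk : k ≤ x
        · have := h k
          simpa [List.countP_cons, hk, hk.trans hxy] using this
        · have : la.countP (fun i => decide (k ≤ i)) = 0 := by
            rw [List.countP_eq_zero]
            intro w hw
            have := ha.1 w hw
            simp only [decide_eq_true_eq]
            exact fun hkw => hk (hkw.trans this)
          omega)
      rw [List.reverse_cons, List.reverse_cons]
      refine tle_trans T (b := lb.reverse ++ [x]) ?_ ?_
      · simpa using tle_mul T [] [x] ih'
      · have : tle T [x] [y] := by
          rcases hxy.eq_or_lt with h | h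
          · exact Or.inl (by rw [h])
          · exact Or.inr (T.std _ _ h)
        simpa using tle_mul T lb.reverse [] this

theorem lex_append (b : List ℕ+) {s t : List ℕ+} (h : List.Lex (· > ·) s t)
    (hl : s.length = t.length) : List.Lex (· > ·) (s ++ b) (t ++ b) := by
  induction h with
  | nil => simp at hl
  | cons h ih => exact List.Lex.cons (ih (by simpa using hl))
  | rel h => exact List.Lex.rel h

theorem lex_trans {a b c : List ℕ+} (h : List.Lex (· > ·) a b) (h' : List.Lex (· > ·) b c) :
    List.Lex (· > ·) a c := by
  induction h generalizing c with
  | nil => cases h' <;> exact List.Lex.nil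
  | cons h ih =>
    cases h' with
    | cons h' => exact List.Lex.cons (ih h')
    | rel h' => exact List.Lex.rel h'
  | rel h =>
    cases h' with
    | cons h' => exact List.Lex.rel h
    | rel hbc => exact List.Lex.rel (gt_trans h hbc)

/-- Lift of a commutative term order to a sorted one on words. -/
def liftOrder (T : CStdTermOrder) : SortedStdTermOrder where
  lt s t := T.lt (sigmaAb s) (sigmaAb t) ∨ (sigmaAb s = sigmaAb t ∧ List.Lex (· > ·) s t)
  irrefl a := by
    rintro (h | h)
    · exact T.irrefl _ h
    · exact irrefl_of (List.Lex (· > ·)) a h.2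
  trans a b c := by
    rintro (h | ⟨h, h2⟩) (h' | ⟨h', h2'⟩)
    · exact Or.inl (T.trans _ _ _ h h')
    · exact Or.inl (h' ▸ h)
    · exact Or.inl (h ▸ h')
    · exact Or.inr ⟨h.trans h', lex_trans h2 h2'⟩
  total a b hab := by
    by_cases h : sigmaAb a = sigmaAb b
    · rcases trichotomous_of (List.Lex (α := ℕ+) (· > ·)) a b with h1 | h1 | h1
      · exact Or.inl (Or.inr ⟨h, h1⟩)
      · exact absurd h1 hab
      · exact Or.inr (Or.inr ⟨h.symm, h1⟩)
    · rcases T.total _ _ h with h | h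
      · exact Or.inl (Or.inl h)
      · exact Or.inr (Or.inl h)
  one_lt t ht := by
    left
    apply T.one_lt
    intro h
    exact ht (perm_of_ab (t := []) h).eq_nil
  mul_lt a b s t := by
    simp only [ab_append]
    rintro (h | ⟨h, h2⟩)
    · left
      have := T.mul_lt (sigmaAb a + sigmaAb b) _ _ h
      rwa [add_right_comm, add_right_comm _ _ (sigmaAb t)] at this
    · right
      refine ⟨by rw [h], ?_⟩
      rw [List.append_assoc, List.append_assoc]
      exact List.Lex.append_left _ (lex_append b h2 (perm_of_ab h).length_eq) a
  std i j h := by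
    left
    simpa [sigmaAb] using T.std i j h
  sorted t s i j h := by
    right
    refine ⟨ab_of_perm ((List.Perm.swap _ _ _).append_left t), ?_⟩
    exact List.Lex.append_left (· > ·) (List.Lex.rel h) t

/-- Weight: the number of letters with index at least `k`. -/
noncomputable def wt (k : ℕ+) (f : ℕ+ →₀ ℕ) : ℕ := f.sum (fun i n => if k ≤ i then n else 0)

theorem wt_add (k : ℕ+) (f g : ℕ+ →₀ ℕ) : wt k (f + g) = wt k f + wt k g := by
  unfold wt
  apply Finsupp.sum_add_index'
  · intro a; simp
  · intro a b c; split_ifs <;> simp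

theorem wt_single (k i : ℕ+) : wt k (Finsupp.single i 1) = if k ≤ i then 1 else 0 := by
  unfold wt
  rw [Finsupp.sum_single_index (by simp)]

theorem wt_ab (k : ℕ+) (l : List ℕ+) :
    wt k (sigmaAb l) = l.countP (fun i => decide (k ≤ i)) := by
  induction l with
  | nil => simp [sigmaAb, wt]
  | cons a l ih =>
    rw [sigmaAb, wt_add, ih, wt_single, List.countP_cons]
    simp [add_comm]

/-- Lexicographic order with the largest index decisive. -/
def lexC (a b : ℕ+ →₀ ℕ) : Prop := ∃ j, (∀ d, j < d → a d = b d) ∧ a j < b j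

theorem lexC_total (a b : ℕ+ →₀ ℕ) (h : a ≠ b) : lexC a b ∨ lexC b a := by
  let S := (a.support ∪ b.support).filter (fun i => a i ≠ b i)
  have hS : S.Nonempty := by
    obtain ⟨i, hi⟩ := DFunLike.ne_iff.1 h
    refine ⟨i, Finset.mem_filter.2 ⟨?_, hi⟩⟩
    simp only [Finset.mem_union, Finsupp.mem_support_iff]
    omega
  have hj := S.max'_mem hS
  have hmax : ∀ d, S.max' hS < d → a d = b d := by
    intro d hd
    by_contra hne
    have : d ∈ S := by
      refine Finset.mem_filter.2 ⟨?_, hne⟩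
      simp only [Finset.mem_union, Finsupp.mem_support_iff]
      omega
    exact absurd (S.le_max' d this) (not_le.2 hd)
  rcases lt_or_gt_of_ne (Finset.mem_filter.1 hj).2 with h1 | h1
  · exact Or.inl ⟨_, hmax, h1⟩
  · exact Or.inr ⟨_, fun d hd => (hmax d hd).symm, h1⟩

theorem lexC_trans {a b c : ℕ+ →₀ ℕ} (h : lexC a b) (h' : lexC b c) : lexC a c := by
  obtain ⟨i, h1, h2⟩ := h
  obtain ⟨j, h3, h4⟩ := h'
  rcases lt_trichotomy i j with hij | rfl | hij
  · exact ⟨j, fun d hd => (h1 d (hij.trans hd)).trans (h3 d hd), by rw [h1 j hij]; exact h4⟩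
  · exact ⟨i, fun d hd => (h1 d hd).trans (h3 d hd), h2.trans h4⟩
  · exact ⟨i, fun d hd => (h1 d hd).trans (h3 d (hij.trans hd)), by rw [← h3 i hij]; exact h2⟩

/-- The term order refining the weight `wt k`. -/
noncomputable def wtOrder (k : ℕ+) : CStdTermOrder where
  lt a b := wt k a < wt k b ∨ (wt k a = wt k b ∧ lexC a b)
  irrefl a := by
    rintro (h | ⟨_, j, _, h⟩)
    · exact lt_irrefl _ h
    · exact lt_irrefl _ h
  trans a b c := by
    rintro (h | ⟨h, h2⟩) (h' | ⟨h', h2'⟩)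
    · exact Or.inl (h.trans h')
    · exact Or.inl (h' ▸ h)
    · exact Or.inl (h ▸ h')
    · exact Or.inr ⟨h.trans h', lexC_trans h2 h2'⟩
  total a b hab := by
    have := lexC_total a b hab
    rcases lt_trichotomy (wt k a) (wt k b) with h | h | h
    · exact Or.inl (Or.inl h)
    · exact this.imp (fun x => Or.inr ⟨h, x⟩) (fun x => Or.inr ⟨h.symm, x⟩)
    · exact Or.inr (Or.inl h)
  one_lt t ht := by
    have h0 : wt k 0 = 0 := by simp [wt]
    rw [h0]
    rcases Nat.eq_zero_or_pos (wt k t) with h | h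
    · refine Or.inr ⟨h.symm, ?_⟩
      rcases lexC_total 0 t ht.symm with h | ⟨j, _, h⟩
      · exact h
      · simp at h
    · exact Or.inl h
  mul_lt t s s' := by
    simp only [wt_add]
    rintro (h | ⟨h, j, h1, h2⟩)
    · exact Or.inl (by omega)
    · refine Or.inr ⟨by omega, j, fun d hd => ?_, ?_⟩
      · simp [h1 d hd]
      · simpa using h2
  std i j h := by
    have hl : lexC (Finsupp.single i 1) (Finsupp.single j 1) := by
      refine ⟨j, fun d hd => ?_, ?_⟩
      · rw [Finsupp.single_eq_of_ne (h.trans hd).ne', Finsupp.single_eq_of_ne hd.ne']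
      · rw [Finsupp.single_eq_of_ne h.ne', Finsupp.single_eq_same]; exact one_pos
    rw [wt_single, wt_single]
    by_cases hi : k ≤ i
    · right; exact ⟨by simp [hi, hi.trans h.le], hl⟩
    · by_cases hj : k ≤ j
      · left; simp [hi, hj]
      · right; exact ⟨by simp [hi, hj], hl⟩

/-- `(σ, σ⁺)` is a Galois coconnection between `(X*, Q)` and `([X], 𝔠)`:
both maps are order-preserving, `σ⁺(σ(m)) ≥_Q m` for every word `m`, and
`σ(σ⁺(w)) ≤_𝔠 w` (indeed `σ(σ⁺(w)) = w`) for every `w ∈ [X]`. -/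
theorem stmt17 :
    (∀ m m' : List ℕ+, Qle m m' → Cle (sigmaAb m) (sigmaAb m')) ∧
    (∀ a b : ℕ+ →₀ ℕ, Cle a b → Qle (sigmaPlus a) (sigmaPlus b)) ∧
    (∀ m : List ℕ+, Qle m (sigmaPlus (sigmaAb m))) ∧
    (∀ w : ℕ+ →₀ ℕ, Cle (sigmaAb (sigmaPlus w)) w ∧ sigmaAb (sigmaPlus w) = w) := by
  refine ⟨?_, ?_, ?_, fun w => ⟨fun T => Or.inl (ab_plus w), ab_plus w⟩⟩
  · intro m m' h T
    rcases h (liftOrder T) with h | h | h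
    · exact Or.inl (by rw [h])
    · exact Or.inr h
    · exact Or.inl h.1
  · intro a b h T
    have h1 := le_of_count T.toStdTermOrder (sigmaPlus a).reverse (sigmaPlus b).reverse
      (List.pairwise_reverse.2 (plus_sorted a)) (List.pairwise_reverse.2 (plus_sorted b)) (by
        intro k
        rw [List.countP_reverse, List.countP_reverse, ← wt_ab, ← wt_ab, ab_plus, ab_plus]
        rcases h (wtOrder k) with h | h | h
        · rw [h]
        · exact h.le
        · exact h.1.le)
    rw [List.reverse_reverse, List.reverse_reverse] at h1
    exact h1
  · intro m T
    rw [plus_ab]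
    exact le_sort T m
end
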